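/- Let a, c, ρ*, σ̄ > 0 and let V := {(ρ, J) ∈ ℝ² : |J|/a < ρ < ρ*/2}. Define σ(x) := −σ̄·x/(x + ρ*), h(x) := x·(x + ρ*)/ρ*, and for J ∈ ℝ, F_J(x) := x − h(x)/2 + ½·√(h(x)² + (2J/a)²). Suppose ρ̂₀ : V → (0, ρ*/2) is differentiable and satisfies F_J(ρ̂₀(ρ, J)) = ρ for all (ρ, J) ∈ V. Define on V: Φ := (2J/a)/h(ρ̂₀), u := c·Φ/(1 + √(1 + Φ²)) (which equals c·tanh(½·arcsinh Φ)), p₀ := a·c·ρ̂₀²/ρ*, the flux f(ρ, J) := ((ρ + ρ̂₀²/ρ*)·u, u·J + p₀) ∈ ℝ², and the entropy η(ρ, J) := √(½·(1 + √(1 + Φ²))) · σ(ρ̂₀). Then the entropy compatibility identity D(η·u)(ρ, J) = Dη(ρ, J) ∘ Df(ρ, J) holds at every (ρ, J) ∈ V. -/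

import Mathlib

/-!
Put `θ = arsinh Φ / 2` and `x = ρ̂₀`. Then `u = c tanh θ`, `η = cosh θ · σ(x)`, and the implicit
equation for `ρ̂₀` says that `(ρ, J/a)` are the energy and momentum densities of a relativistic
perfect fluid with rest energy density `x`, pressure `h(x) - x` and enthalpy density `h(x)`:
`ρ = x + h sinh² θ`, `J/a = h sinh θ cosh θ`. The flux becomes
`f = (c h sinh θ cosh θ, a c (h cosh² θ - x))`. Since `σ = h σ'`, differentiating gives
`dη = σ' (cosh θ dρ - sinh θ dJ/a)` and
`d(ηu) = c σ' (cosh θ d(h sinh θ cosh θ) - sinh θ d(h cosh² θ - x))`, and the right-hand side of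
the second identity is the covector `dη` applied to `df`.
-/

open Real Filter Topology

namespace PerfectFluid

/-- Component `T⁰⁰` of the stress-energy tensor of a perfect fluid with rest energy density `x`,
enthalpy density `h` and rapidity `θ`, in units where the speed of light is `1`. -/
noncomputable def energyDensity (x h θ : ℝ) : ℝ := x + h * sinh θ ^ 2

/-- Component `T⁰¹` of the stress-energy tensor of a perfect fluid with enthalpy density `h` and
rapidity `θ`, in units where the speed of light is `1`. -/
noncomputable def momentumDensity (h θ : ℝ) : ℝ := h * (sinh θ * cosh θ)

/-- Component `T¹¹` of the stress-energy tensor of a perfect fluid with rest energy density `x`,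
enthalpy density `h` and rapidity `θ`, in units where the speed of light is `1`. -/
noncomputable def momentumFlux (x h θ : ℝ) : ℝ := h * cosh θ ^ 2 - x

theorem energyDensity_add_pressure_mul_tanh (x h θ : ℝ) :
    (energyDensity x h θ + (h - x)) * tanh θ = momentumDensity h θ := by
  have hθ : cosh θ ≠ 0 := (cosh_pos θ).ne'
  rw [energyDensity, momentumDensity, tanh_eq_sinh_div_cosh, sinh_sq]
  field_simp
  ring

theorem tanh_mul_momentumDensity_add_pressure (x h θ : ℝ) :
    tanh θ * momentumDensity h θ + (h - x) = momentumFlux x h θ := by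
  have hθ : cosh θ ≠ 0 := (cosh_pos θ).ne'
  rw [momentumDensity, momentumFlux, tanh_eq_sinh_div_cosh, cosh_sq]
  field_simp
  ring

/-- The rapidity `θ` for which `sinh (2 * θ) = Φ`; the velocity `u` is then `c * tanh θ`. -/
noncomputable def rapidity (Φ : ℝ) : ℝ := arsinh Φ / 2

theorem differentiable_rapidity : Differentiable ℝ rapidity :=
  differentiable_arsinh.div_const 2

theorem sinh_two_mul_rapidity (Φ : ℝ) : sinh (2 * rapidity Φ) = Φ := by
  rw [rapidity, mul_div_cancel₀ _ two_ne_zero, sinh_arsinh]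

theorem cosh_two_mul_rapidity (Φ : ℝ) : cosh (2 * rapidity Φ) = √(1 + Φ ^ 2) := by
  rw [rapidity, mul_div_cancel₀ _ two_ne_zero, cosh_arsinh]

theorem cosh_rapidity (Φ : ℝ) : cosh (rapidity Φ) = √((1 / 2) * (1 + √(1 + Φ ^ 2))) := by
  have hsq : (1 / 2) * (1 + cosh (2 * rapidity Φ)) = cosh (rapidity Φ) ^ 2 := by
    rw [cosh_two_mul, sinh_sq]
    ring
  rw [← cosh_two_mul_rapidity, hsq, sqrt_sq (cosh_pos _).le]

theorem tanh_rapidity (Φ : ℝ) : tanh (rapidity Φ) = Φ / (1 + √(1 + Φ ^ 2)) := by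
  have hcosh : cosh (rapidity Φ) ≠ 0 := (cosh_pos _).ne'
  have hden : 1 + cosh (2 * rapidity Φ) = 2 * cosh (rapidity Φ) ^ 2 := by
    rw [cosh_two_mul, sinh_sq]
    ring
  calc tanh (rapidity Φ) = sinh (2 * rapidity Φ) / (1 + cosh (2 * rapidity Φ)) := by
        rw [tanh_eq_sinh_div_cosh, sinh_two_mul, hden]
        field_simp
    _ = Φ / (1 + √(1 + Φ ^ 2)) := by rw [sinh_two_mul_rapidity, cosh_two_mul_rapidity]

theorem momentumDensity_rapidity {h : ℝ} (hh : h ≠ 0) (m : ℝ) :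
    momentumDensity h (rapidity (2 * m / h)) = m := by
  have hm : 2 * (sinh (rapidity (2 * m / h)) * cosh (rapidity (2 * m / h))) = 2 * m / h := by
    rw [← mul_assoc, ← sinh_two_mul, sinh_two_mul_rapidity]
  rw [eq_div_iff hh] at hm
  rw [momentumDensity]
  linarith

theorem energyDensity_rapidity {h : ℝ} (hh : 0 < h) (x m : ℝ) :
    energyDensity x h (rapidity (m / h)) = x - h / 2 + (1 / 2) * √(h ^ 2 + m ^ 2) := by
  have hsqrt : √(h ^ 2 + m ^ 2) = h * cosh (2 * rapidity (m / h)) := by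
    rw [cosh_two_mul_rapidity, ← sqrt_sq hh.le, ← sqrt_mul (sq_nonneg _), sqrt_sq hh.le]
    congr 1
    field_simp
  rw [energyDensity, hsqrt, cosh_two_mul, cosh_sq]
  ring

section Derivatives

variable {E : Type*} [NormedAddCommGroup E] [NormedSpace ℝ E] {p : E}
  {x H S θ : E → ℝ} {x' : E →L[ℝ] ℝ} {s : ℝ}

theorem hasFDerivAt_cosh_mul_of_energyDensity_of_momentumDensity {ρ' m' : E →L[ℝ] ℝ}
    (hx : HasFDerivAt x x' p) (hH : DifferentiableAt ℝ H p) (hθ : DifferentiableAt ℝ θ p)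
    (hS : HasFDerivAt S (s • x') p) (hSH : S p = H p * s)
    (hρ : HasFDerivAt (fun q => energyDensity (x q) (H q) (θ q)) ρ' p)
    (hm : HasFDerivAt (fun q => momentumDensity (H q) (θ q)) m' p) :
    HasFDerivAt (fun q => cosh (θ q) * S q)
      (s • (cosh (θ p) • ρ' - sinh (θ p) • m')) p := by
  have dsinh := hθ.hasFDerivAt.sinh
  have dcosh := hθ.hasFDerivAt.cosh
  refine (dcosh.mul hS).congr_fderiv ?_
  rw [hρ.unique (hx.add (hH.hasFDerivAt.mul (dsinh.pow 2))),
    hm.unique (hH.hasFDerivAt.mul (dsinh.mul dcosh))]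
  ext v
  simp only [hSH, add_apply, sub_apply, smul_apply, smul_eq_mul, nsmul_eq_mul, smul_add,
    Nat.add_one_sub_one, Nat.cast_ofNat, pow_one]
  linear_combination (-(s * H p * sinh (θ p) * fderiv ℝ θ p v)) * cosh_sq (θ p)

theorem hasFDerivAt_sinh_mul_of_momentumDensity_of_momentumFlux {m' q' : E →L[ℝ] ℝ}
    (hx : HasFDerivAt x x' p) (hH : DifferentiableAt ℝ H p) (hθ : DifferentiableAt ℝ θ p)
    (hS : HasFDerivAt S (s • x') p) (hSH : S p = H p * s)
    (hm : HasFDerivAt (fun q => momentumDensity (H q) (θ q)) m' p)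
    (hq : HasFDerivAt (fun q => momentumFlux (x q) (H q) (θ q)) q' p) :
    HasFDerivAt (fun q => sinh (θ q) * S q)
      (s • (cosh (θ p) • m' - sinh (θ p) • q')) p := by
  have dsinh := hθ.hasFDerivAt.sinh
  have dcosh := hθ.hasFDerivAt.cosh
  refine (dsinh.mul hS).congr_fderiv ?_
  rw [hm.unique (hH.hasFDerivAt.mul (dsinh.mul dcosh)),
    hq.unique ((hH.hasFDerivAt.mul (dcosh.pow 2)).sub hx)]
  ext v
  simp only [hSH, add_apply, sub_apply, smul_apply, smul_eq_mul, nsmul_eq_mul, smul_add,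
    Nat.add_one_sub_one, Nat.cast_ofNat, pow_one]
  linear_combination (-(s * H p * cosh (θ p) * fderiv ℝ θ p v)) * cosh_sq (θ p)

end Derivatives

theorem fderiv_sinh_mul_eq_comp {a c s : ℝ} {p : ℝ × ℝ} {x H S θ : ℝ × ℝ → ℝ} (ha : a ≠ 0)
    (hx : DifferentiableAt ℝ x p) (hH : DifferentiableAt ℝ H p) (hθ : DifferentiableAt ℝ θ p)
    (hS : HasFDerivAt S (s • fderiv ℝ x p) p) (hSH : S p = H p * s)
    (hρ : ∀ᶠ q in 𝓝 p, energyDensity (x q) (H q) (θ q) = q.1)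
    (hm : ∀ᶠ q in 𝓝 p, momentumDensity (H q) (θ q) = q.2 / a) :
    fderiv ℝ (fun q => c * (sinh (θ q) * S q)) p =
      (fderiv ℝ (fun q => cosh (θ q) * S q) p).comp
        (fderiv ℝ (fun q => (c * momentumDensity (H q) (θ q),
          a * c * momentumFlux (x q) (H q) (θ q))) p) := by
  have dρ := (hasFDerivAt_fst (𝕜 := ℝ) (p := p)).congr_of_eventuallyEq hρ
  have dm : HasFDerivAt (fun q => momentumDensity (H q) (θ q))
      (a⁻¹ • ContinuousLinearMap.snd ℝ ℝ ℝ) p := by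
    simp only [div_eq_inv_mul] at hm
    exact (hasFDerivAt_snd.const_mul a⁻¹).congr_of_eventuallyEq hm
  have dq : DifferentiableAt ℝ (fun q => momentumFlux (x q) (H q) (θ q)) p :=
    (hH.mul (hθ.cosh.pow 2)).sub hx
  have dη := hasFDerivAt_cosh_mul_of_energyDensity_of_momentumDensity
    hx.hasFDerivAt hH hθ hS hSH dρ dm
  have dζ := (hasFDerivAt_sinh_mul_of_momentumDensity_of_momentumFlux
    hx.hasFDerivAt hH hθ hS hSH dm dq.hasFDerivAt).const_mul c
  have df := (dm.const_mul c).prodMk (dq.hasFDerivAt.const_mul (a * c))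
  rw [dζ.fderiv, dη.fderiv, df.fderiv]
  refine ContinuousLinearMap.ext fun v => ?_
  simp only [ContinuousLinearMap.comp_apply, ContinuousLinearMap.prod_apply, smul_apply, sub_apply,
    ContinuousLinearMap.coe_fst', ContinuousLinearMap.coe_snd', smul_eq_mul]
  field_simp

theorem fderiv_entropyFlux_eq_comp {a c s : ℝ} {V : Set (ℝ × ℝ)} {p : ℝ × ℝ} (ha : a ≠ 0)
    (hV : V ∈ 𝓝 p) {x H S θ : ℝ × ℝ → ℝ}
    (hx : DifferentiableAt ℝ x p) (hH : DifferentiableAt ℝ H p) (hθ : DifferentiableAt ℝ θ p)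
    (hS : HasFDerivAt S (s • fderiv ℝ x p) p) (hSH : S p = H p * s)
    (hρ : ∀ q ∈ V, energyDensity (x q) (H q) (θ q) = q.1)
    (hm : ∀ q ∈ V, momentumDensity (H q) (θ q) = q.2 / a)
    {u η : ℝ × ℝ → ℝ} {f : ℝ × ℝ → ℝ × ℝ}
    (hu : ∀ q ∈ V, u q = c * tanh (θ q))
    (hη : ∀ q ∈ V, η q = cosh (θ q) * S q)
    (hf : ∀ q ∈ V, f q = ((q.1 + (H q - x q)) * u q, u q * q.2 + a * c * (H q - x q))) :
    fderiv ℝ (fun q => η q * u q) p = (fderiv ℝ η p).comp (fderiv ℝ f p) := by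
  have hζ : ∀ q ∈ V, η q * u q = c * (sinh (θ q) * S q) := fun q hq => by
    have hcosh : cosh (θ q) ≠ 0 := (cosh_pos _).ne'
    rw [hη q hq, hu q hq, tanh_eq_sinh_div_cosh]
    field_simp
  have hflux : ∀ q ∈ V, f q =
      (c * momentumDensity (H q) (θ q), a * c * momentumFlux (x q) (H q) (θ q)) := fun q hq => by
    have hmass : (q.1 + (H q - x q)) * tanh (θ q) = momentumDensity (H q) (θ q) := by
      rw [← hρ q hq, energyDensity_add_pressure_mul_tanh]
    have hmomentum : tanh (θ q) * (q.2 / a) + (H q - x q) = momentumFlux (x q) (H q) (θ q) := by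
      rw [← hm q hq, tanh_mul_momentumDensity_add_pressure]
    rw [hf q hq, hu q hq, ← hmass, ← hmomentum]
    ext
    · ring
    · field_simp
  rw [(Set.EqOn.eventuallyEq_of_mem hζ hV).fderiv_eq,
    (Set.EqOn.eventuallyEq_of_mem hη hV).fderiv_eq,
    (Set.EqOn.eventuallyEq_of_mem hflux hV).fderiv_eq]
  exact fderiv_sinh_mul_eq_comp ha hx hH hθ hS hSH
    (mem_of_superset hV hρ) (mem_of_superset hV hm)

end PerfectFluid

open PerfectFluid

theorem statement_19_general {a c : ℝ} (ha : a ≠ 0) {V : Set (ℝ × ℝ)} (hV : IsOpen V)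
    {σ h : ℝ → ℝ} {ρ₀h : ℝ × ℝ → ℝ}
    (hρ₀hd : ∀ p ∈ V, DifferentiableAt ℝ ρ₀h p)
    (hhd : ∀ p ∈ V, DifferentiableAt ℝ h (ρ₀h p))
    (hhpos : ∀ p ∈ V, 0 < h (ρ₀h p))
    (hσd : ∀ p ∈ V, HasDerivAt σ (σ (ρ₀h p) / h (ρ₀h p)) (ρ₀h p))
    (hρ₀eq : ∀ p ∈ V, ρ₀h p - h (ρ₀h p) / 2 +
      (1 / 2) * √(h (ρ₀h p) ^ 2 + (2 * p.2 / a) ^ 2) = p.1)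
    {Φ u : ℝ × ℝ → ℝ}
    (hΦ : ∀ p ∈ V, Φ p = (2 * p.2 / a) / h (ρ₀h p))
    (hu : ∀ p ∈ V, u p = c * Φ p / (1 + √(1 + Φ p ^ 2)))
    {f : ℝ × ℝ → ℝ × ℝ}
    (hf : ∀ p ∈ V, f p = ((p.1 + (h (ρ₀h p) - ρ₀h p)) * u p,
      u p * p.2 + a * c * (h (ρ₀h p) - ρ₀h p)))
    {η : ℝ × ℝ → ℝ}
    (hη : ∀ p ∈ V, η p = √((1 / 2) * (1 + √(1 + Φ p ^ 2))) * σ (ρ₀h p)) :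
    ∀ p ∈ V, fderiv ℝ (fun q => η q * u q) p = (fderiv ℝ η p).comp (fderiv ℝ f p) := by
  intro p hp
  have hV_nhds : V ∈ 𝓝 p := hV.mem_nhds hp
  have dh : DifferentiableAt ℝ (fun q => h (ρ₀h q)) p := (hhd p hp).comp p (hρ₀hd p hp)
  have dΦ : DifferentiableAt ℝ Φ p := by
    have dquot : DifferentiableAt ℝ (fun q : ℝ × ℝ => 2 * q.2 / a / h (ρ₀h q)) p := by
      fun_prop (disch := exact (hhpos p hp).ne')
    exact dquot.congr_of_eventuallyEq (mem_of_superset hV_nhds hΦ)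
  have dθ : DifferentiableAt ℝ (fun q => rapidity (Φ q)) p :=
    (differentiable_rapidity _).comp p dΦ
  have dσ := (hσd p hp).comp_hasFDerivAt p (hρ₀hd p hp).hasFDerivAt
  have hσh : σ (ρ₀h p) = h (ρ₀h p) * (σ (ρ₀h p) / h (ρ₀h p)) :=
    (mul_div_cancel₀ _ (hhpos p hp).ne').symm
  refine fderiv_entropyFlux_eq_comp ha hV_nhds (hρ₀hd p hp) dh dθ dσ hσh
    (fun q hq => ?_) (fun q hq => ?_) (fun q hq => ?_) (fun q hq => ?_) hf
  · rw [hΦ q hq, energyDensity_rapidity (hhpos q hq), hρ₀eq q hq]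
  · rw [hΦ q hq, mul_div_assoc 2, momentumDensity_rapidity (hhpos q hq).ne']
  · rw [hu q hq, tanh_rapidity, mul_div_assoc]
  · rw [hη q hq, cosh_rapidity, Function.comp_apply]

theorem isOpen_setOf_abs_div_lt_and_lt (a r : ℝ) :
    IsOpen {p : ℝ × ℝ | |p.2| / a < p.1 ∧ p.1 < r} :=
  (isOpen_lt (by fun_prop) continuous_fst).inter (isOpen_lt continuous_fst continuous_const)

theorem hasDerivAt_homographic {b r x : ℝ} (hx : x ≠ 0) (hxr : x + r ≠ 0) :
    HasDerivAt (fun y => -b * y / (y + r)) (-b * x / (x + r) / (x * (x + r) / r)) x := by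
  refine (((hasDerivAt_id' x).const_mul (-b)).div ((hasDerivAt_id' x).add_const r)
    hxr).congr_deriv ?_
  field_simp
  ring

theorem homographic_sub_self {r : ℝ} (hr : r ≠ 0) (x : ℝ) :
    x * (x + r) / r - x = x ^ 2 / r := by
  field_simp
  ring

/-- Proposition 17 (homographic entropy for a "Lorentz-hyperbolic" system):
entropy compatibility identity D(ηu) = Dη ∘ Df on V. -/
theorem statement_19 (a c ρs σb : ℝ)
    (ha : 0 < a) (hc : 0 < c) (hρs : 0 < ρs) (hσb : 0 < σb)
    (V : Set (ℝ × ℝ)) (hV : V = {p : ℝ × ℝ | |p.2| / a < p.1 ∧ p.1 < ρs / 2})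
    (σ h : ℝ → ℝ)
    (hσ : σ = fun x => -σb * x / (x + ρs))
    (hh : h = fun x => x * (x + ρs) / ρs)
    (F : ℝ → ℝ → ℝ)
    (hF : F = fun J x =>
      x - h x / 2 + (1 / 2) * Real.sqrt (h x ^ 2 + (2 * J / a) ^ 2))
    (ρ₀h : ℝ × ℝ → ℝ)
    (hρ₀hd : ∀ p ∈ V, DifferentiableAt ℝ ρ₀h p)
    (hρ₀mem : ∀ p ∈ V, ρ₀h p ∈ Set.Ioo 0 (ρs / 2))
    (hρ₀eq : ∀ p ∈ V, F p.2 (ρ₀h p) = p.1)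
    (Φ u p₀ : ℝ × ℝ → ℝ)
    (hΦ : Φ = fun p => (2 * p.2 / a) / h (ρ₀h p))
    (hu : u = fun p => c * Φ p / (1 + Real.sqrt (1 + Φ p ^ 2)))
    (hp₀ : p₀ = fun p => a * c * (ρ₀h p) ^ 2 / ρs)
    (f : ℝ × ℝ → ℝ × ℝ)
    (hf : f = fun p => ((p.1 + (ρ₀h p) ^ 2 / ρs) * u p, u p * p.2 + p₀ p))
    (η : ℝ × ℝ → ℝ)
    (hη : η = fun p =>
      Real.sqrt ((1 / 2) * (1 + Real.sqrt (1 + Φ p ^ 2))) * σ (ρ₀h p)) :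
    ∀ p ∈ V, fderiv ℝ (fun q => η q * u q) p = (fderiv ℝ η p).comp (fderiv ℝ f p) := by
  subst hV hσ hh hF hΦ hu hp₀ hf hη
  exact statement_19_general (σ := fun x => -σb * x / (x + ρs)) (h := fun x => x * (x + ρs) / ρs)
    ha.ne' (isOpen_setOf_abs_div_lt_and_lt a (ρs / 2)) hρ₀hd (fun _ _ => by fun_prop)
    (fun p hp => by have := (hρ₀mem p hp).1; positivity)
    (fun p hp => have hpos := (hρ₀mem p hp).1
      hasDerivAt_homographic hpos.ne' (add_pos hpos hρs).ne')
    hρ₀eq (fun _ _ => rfl) (fun _ _ => rfl)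
    (fun _ _ => by simp only [homographic_sub_self hρs.ne', mul_div_assoc (a * c)])
    (fun _ _ => rfl)
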